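/- arXiv:2501.03869 — 3 statements merged into one kernel-verified Lean document; each statement's English description precedes it below -/
import Mathlib

section
/- Let G34 be the 19×19 symmetric integer matrix with rows [3,0,0,0,0,0,0,0,0,0,0,0,0,0,0,0,0,0,-1]; [0,4,-2,1,0,2,1,-2,0,2,-2,1,-1,-1,-2,-2,1,-1,2]; [0,-2,4,1,-3,-2,-1,2,2,-1,1,1,-1,-1,2,2,0,2,4]; [0,1,1,4,-4,-1,-1,1,2,1,1,2,0,-2,-1,1,1,2,6]; [0,0,-3,-4,8,2,0,-2,-2,-2,-1,-1,0,1,1,-2,-2,-2,-8]; [0,2,-2,-1,2,4,0,-2,-1,2,-2,-1,-1,0,0,-2,-1,-2,-2]; [0,1,-1,-1,0,0,4,-2,-2,1,-1,0,1,0,-1,0,2,-2,0]; [0,-2,2,1,-2,-2,-2,4,1,-1,1,0,0,1,0,2,0,2,1]; [0,0,2,2,-2,-1,-2,1,4,0,0,1,-2,-1,1,0,-1,2,4]; [0,2,-1,1,-2,2,1,-1,0,4,-2,0,0,0,-1,-1,0,-1,2]; [0,-2,1,1,-1,-2,-1,1,0,-2,4,0,2,0,0,2,0,2,1]; [0,1,1,2,-1,-1,0,0,1,0,0,4,0,-2,0,0,1,1,5];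 [0,-1,-1,0,0,-1,1,0,-2,0,2,0,4,1,-1,1,0,0,-1]; [0,-1,-1,-2,1,0,0,1,-1,0,0,-2,1,4,-1,0,-1,-1,-4]; [0,-2,2,-1,1,0,-1,0,1,-1,0,0,-1,-1,4,0,-2,0,-1]; [0,-2,2,1,-2,-2,0,2,0,-1,2,0,1,0,0,4,1,2,2]; [0,1,0,1,-2,-1,2,0,-1,0,0,1,0,-1,-2,1,4,0,3]; [0,-1,2,2,-2,-2,-2,2,2,-1,2,1,0,-1,0,2,0,4,4]; [-1,2,4,6,-8,-2,0,1,4,2,1,5,-1,-4,-1,2,3,4,15], and let e₁ ∈ ℤ^19 be the first standard basis vector. Then G34 is positive definite, the set S = {α ∈ ℤ^19 : αᵀ·G34·α = 3 and αᵀ·G34·e₁ = 1} is finite with exactly 243 elements, and S generates ℤ^19 as a ℤ-module. -/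
/-!
Completing squares in the variables `α₁, …, α₁₇, α₀, s`, where `s = 3 * α₀ - α₁₈ = α · η`, writes a
positive multiple `den * α²` as a combination, with positive integer weights, of squares of integral
linear forms that are triangular in these variables (`lagrange`). The last term is `den / 3 * s ^ 2`.
Positive definiteness is immediate: if all the squares vanish, then so do the variables, one after
the other from the last (`eq_zeros_of_rowsForm_le_zero`).

For vectors with `α² = 3` and `α · η = 1` the variable `s` is `1`, and the remaining squares have the
fixed sum `budget`. Choosing `α₀, α₁₇, …, α₁` in turn, each square must fit in what is left of the
budget, which confines the next coordinate to a short interval; this is the Fincke–Pohst enumeration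
(`enumerate`, proved to be exhaustive in `mem_enumerate`). Evaluating it gives exactly 243 distinct
vectors (`planeList_card`, `image_planes`).

For generation, nineteen of these vectors are the rows of an integer matrix `planeBasis` with an
integer inverse, so they already form a basis of the lattice (`span_planes`).
-/


open Matrix

def G34 : Matrix (Fin 19) (Fin 19) ℤ :=
  !![3, 0, 0, 0, 0, 0, 0, 0, 0, 0, 0, 0, 0, 0, 0, 0, 0, 0, -1;
    0, 4, -2, 1, 0, 2, 1, -2, 0, 2, -2, 1, -1, -1, -2, -2, 1, -1, 2;
    0, -2, 4, 1, -3, -2, -1, 2, 2, -1, 1, 1, -1, -1, 2, 2, 0, 2, 4;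
    0, 1, 1, 4, -4, -1, -1, 1, 2, 1, 1, 2, 0, -2, -1, 1, 1, 2, 6;
    0, 0, -3, -4, 8, 2, 0, -2, -2, -2, -1, -1, 0, 1, 1, -2, -2, -2, -8;
    0, 2, -2, -1, 2, 4, 0, -2, -1, 2, -2, -1, -1, 0, 0, -2, -1, -2, -2;
    0, 1, -1, -1, 0, 0, 4, -2, -2, 1, -1, 0, 1, 0, -1, 0, 2, -2, 0;
    0, -2, 2, 1, -2, -2, -2, 4, 1, -1, 1, 0, 0, 1, 0, 2, 0, 2, 1;
    0, 0, 2, 2, -2, -1, -2, 1, 4, 0, 0, 1, -2, -1, 1, 0, -1, 2, 4;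
    0, 2, -1, 1, -2, 2, 1, -1, 0, 4, -2, 0, 0, 0, -1, -1, 0, -1, 2;
    0, -2, 1, 1, -1, -2, -1, 1, 0, -2, 4, 0, 2, 0, 0, 2, 0, 2, 1;
    0, 1, 1, 2, -1, -1, 0, 0, 1, 0, 0, 4, 0, -2, 0, 0, 1, 1, 5;
    0, -1, -1, 0, 0, -1, 1, 0, -2, 0, 2, 0, 4, 1, -1, 1, 0, 0, -1;
    0, -1, -1, -2, 1, 0, 0, 1, -1, 0, 0, -2, 1, 4, -1, 0, -1, -1, -4;
    0, -2, 2, -1, 1, 0, -1, 0, 1, -1, 0, 0, -1, -1, 4, 0, -2, 0, -1;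
    0, -2, 2, 1, -2, -2, 0, 2, 0, -1, 2, 0, 1, 0, 0, 4, 1, 2, 2;
    0, 1, 0, 1, -2, -1, 2, 0, -1, 0, 0, 1, 0, -1, -2, 1, 4, 0, 3;
    0, -1, 2, 2, -2, -2, -2, 2, 2, -1, 2, 1, 0, -1, 0, 2, 0, 4, 4;
    -1, 2, 4, 6, -8, -2, 0, 1, 4, 2, 1, 5, -1, -4, -1, 2, 3, 4, 15]

/-! ### Lagrange forms and Fincke–Pohst enumeration -/

/-- One step of a Lagrange (completing-the-square) decomposition. On a vector `x :: l` of the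
variables from the current one on, it contributes `w * (p * x + c ⬝ l) ^ 2`. The number `t` is a
bound for `|p * x + c ⬝ l|` used in the enumeration. -/
structure LagrangeRow where
  w : ℤ
  p : ℤ
  t : ℤ
  c : List ℤ

/-- Dot product of two lists of integers. -/
def dot : List ℤ → List ℤ → ℤ
  | a :: as, b :: bs => a * b + dot as bs
  | _, _ => 0

/-- The quadratic form given by a list of Lagrange rows, the first row belonging to the first
variable. Variables beyond the last row occur only in the linear forms. -/
def rowsForm : List LagrangeRow → List ℤ → ℤ
  | r :: rs, x :: l => r.w * (r.p * x + dot r.c l) ^ 2 + rowsForm rs l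
  | _, _ => 0

/-- The integers `x` with `lo ≤ x ≤ hi`. -/
def intervalList (lo hi : ℤ) : List ℤ :=
  (List.range (hi + 1 - lo).toNat).map fun k : ℕ => lo + (k : ℤ)

/-- Fincke–Pohst enumeration: all vectors `xs ++ tail` at which the form `rs` takes a value `≤ b₀`,
each paired with what remains of the budget `b₀`. The last variable is chosen first. -/
def enumerate (tail : List ℤ) (b₀ : ℤ) : List LagrangeRow → List (List ℤ × ℤ)
  | [] => [(tail, b₀)]
  | r :: rs => (enumerate tail b₀ rs).flatMap fun lb =>
      ((intervalList (-((r.t + dot r.c lb.1) / r.p)) ((r.t - dot r.c lb.1) / r.p)).map fun x =>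
        (x :: lb.1, lb.2 - r.w * (r.p * x + dot r.c lb.1) ^ 2)).filter fun q => decide (0 ≤ q.2)

theorem mem_intervalList {lo hi x : ℤ} : x ∈ intervalList lo hi ↔ lo ≤ x ∧ x ≤ hi := by
  simp only [intervalList, List.mem_map, List.mem_range]
  constructor
  · rintro ⟨k, hk, rfl⟩
    omega
  · rintro ⟨h1, h2⟩
    exact ⟨(x - lo).toNat, by omega, by omega⟩

/-- A linear form `p * x + v` whose weighted square fits in the budget has `x` in the interval
searched by `enumerate`. -/
theorem mem_interval_of_sq_le {w p t v x b₀ : ℤ} (hw : 0 < w) (hp : 0 < p) (ht : 0 ≤ t)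
    (hb : b₀ < w * (t + 1) ^ 2) (h : w * (p * x + v) ^ 2 ≤ b₀) :
    x ∈ intervalList (-((t + v) / p)) ((t - v) / p) := by
  have h1 : (p * x + v) ^ 2 < (t + 1) ^ 2 := lt_of_mul_lt_mul_left (h.trans_lt hb) hw.le
  have h2 := abs_lt.1 (abs_lt_of_sq_lt_sq h1 (by omega))
  rw [mem_intervalList, neg_le, Int.le_ediv_iff_mul_le hp, Int.le_ediv_iff_mul_le hp]
  constructor <;> nlinarith [h2.1, h2.2]

theorem rowsForm_nonneg : ∀ (rs : List LagrangeRow) (l : List ℤ), (∀ r ∈ rs, 0 < r.w) →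
    0 ≤ rowsForm rs l
  | [], _, _ => by simp [rowsForm]
  | _ :: _, [], _ => by simp [rowsForm]
  | r :: rs, x :: l, h => by
    have := rowsForm_nonneg rs l fun r' hr' => h r' (List.mem_cons_of_mem _ hr')
    have := h r List.mem_cons_self
    simp only [rowsForm]
    positivity

/-- Correctness of the enumeration. The conditions on `t` say that it bounds the linear form of the
row whenever the corresponding term fits in the budget `b₀`. -/
theorem mem_enumerate (tail : List ℤ) (b₀ : ℤ) : ∀ (rs : List LagrangeRow),
    (∀ r ∈ rs, 0 < r.w ∧ 0 < r.p ∧ 0 ≤ r.t ∧ b₀ < r.w * (r.t + 1) ^ 2) → 0 ≤ b₀ →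
    ∀ l b, (l, b) ∈ enumerate tail b₀ rs ↔
      ∃ xs : List ℤ, xs.length = rs.length ∧ l = xs ++ tail ∧ rowsForm rs l + b = b₀ ∧ 0 ≤ b
  | [], _, h0, l, b => by
    simp only [enumerate, List.mem_singleton, Prod.mk.injEq, List.length_nil,
      List.length_eq_zero_iff, exists_eq_left, List.nil_append, rowsForm, zero_add]
    constructor
    · rintro ⟨rfl, rfl⟩
      exact ⟨rfl, rfl, h0⟩
    · rintro ⟨rfl, rfl, -⟩
      exact ⟨rfl, rfl⟩
  | r :: rs, h, h0, l, b => by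
    have hrs : ∀ r ∈ rs, 0 < r.w ∧ 0 < r.p ∧ 0 ≤ r.t ∧ b₀ < r.w * (r.t + 1) ^ 2 :=
      fun r' hr' => h r' (List.mem_cons_of_mem _ hr')
    obtain ⟨hw, hp, ht, hb⟩ := h r List.mem_cons_self
    simp only [enumerate, List.mem_flatMap, List.mem_filter, List.mem_map, Prod.mk.injEq,
      decide_eq_true_eq, Prod.exists]
    constructor
    · rintro ⟨l', b', hl', ⟨x, -, rfl, rfl⟩, hb'⟩
      obtain ⟨xs, hlen, rfl, hsum, -⟩ := (mem_enumerate tail b₀ rs hrs h0 l' b').1 hl'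
      refine ⟨x :: xs, by simp [hlen], rfl, ?_, hb'⟩
      simp only [rowsForm]
      linarith
    · rintro ⟨xs, hlen, rfl, hsum, hb'⟩
      obtain _ | ⟨x, xs⟩ := xs
      · simp at hlen
      simp only [List.cons_append, rowsForm] at hsum
      have hnn := rowsForm_nonneg rs (xs ++ tail) fun r' hr' => (hrs r' hr').1
      have hsq : 0 ≤ r.w * (r.p * x + dot r.c (xs ++ tail)) ^ 2 := by positivity
      refine ⟨xs ++ tail, b₀ - rowsForm rs (xs ++ tail),
        (mem_enumerate tail b₀ rs hrs h0 _ _).2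
          ⟨xs, by simpa using hlen, rfl, by ring, by linarith⟩,
        ⟨x, mem_interval_of_sq_le hw hp ht hb (by linarith), rfl, by linarith⟩, hb'⟩

theorem dot_zeros : ∀ (c : List ℤ) (n : ℕ), dot c (List.replicate n 0) = 0
  | [], _ => rfl
  | _ :: _, 0 => rfl
  | _ :: c, n + 1 => by simp [List.replicate_succ, dot, dot_zeros c n]

/-- A Lagrange form with positive weights and positive pivots vanishes only at zero, once the
variables beyond its rows are set to zero. -/
theorem eq_zeros_of_rowsForm_le_zero (m : ℕ) : ∀ (rs : List LagrangeRow) (xs : List ℤ),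
    (∀ r ∈ rs, 0 < r.w ∧ 0 < r.p) → xs.length = rs.length →
    rowsForm rs (xs ++ List.replicate m 0) ≤ 0 → xs = List.replicate rs.length 0
  | [], xs, _, hlen, _ => by simpa using hlen
  | r :: rs, [], _, hlen, _ => by simp at hlen
  | r :: rs, x :: xs, h, hlen, hle => by
    have hrs : ∀ r ∈ rs, 0 < r.w ∧ 0 < r.p := fun r' hr' => h r' (List.mem_cons_of_mem _ hr')
    obtain ⟨hw, hp⟩ := h r List.mem_cons_self
    have hnn := rowsForm_nonneg rs (xs ++ List.replicate m 0) fun r' hr' => (hrs r' hr').1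
    simp only [List.cons_append, rowsForm] at hle
    have hsq : 0 ≤ r.w * (r.p * x + dot r.c (xs ++ List.replicate m 0)) ^ 2 := by positivity
    have hxs := eq_zeros_of_rowsForm_le_zero m rs xs hrs (by simpa using hlen) (by linarith)
    rw [hxs, List.replicate_append_replicate, dot_zeros] at hsq hle
    rw [hxs, List.replicate_append_replicate] at hnn
    have hz : r.w * (r.p * x + 0) ^ 2 = 0 := by linarith
    have hx : x = 0 := by simpa [hw.ne', hp.ne'] using hz
    rw [hx, hxs, List.length_cons, List.replicate_succ]

/-! ### The Lagrange decomposition of `G34` and positivity -/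

/-- The common denominator of the Lagrange decomposition of `G34`. -/
def den : ℤ := 5651662074828000

/-- The Lagrange decomposition of `den * G34` in the variables `α₁, …, α₁₇, α₀, s`, where
`s = 3 * α₀ - α₁₈ = α · η`, without its last term `den / 3 * s ^ 2`. -/
def rows : List LagrangeRow :=
  [⟨1412915518707000, 4, 3, [-2, 1, 0, 2, 1, -2, 0, 2, -2, 1, -1, -1, -2, -2, 1, -1, 6, -2]⟩,
   ⟨470971839569000, 6, 5, [3, -6, -2, -1, 2, 4, 0, 0, 3, -3, -3, 2, 2, 1, 3, 30, -10]⟩,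
   ⟨470971839569000, 6, 5, [-5, -2, -2, 2, 2, 1, 3, 2, 2, -2, -2, 2, 1, 3, 18, -6]⟩,
   ⟨13456338273400, 35, 33, [2, -16, -2, 10, -19, 3, 16, -8, -16, 14, -2, -13, 9, -18, 6]⟩,
   ⟨220595709400, 244, 261, [-97, -34, -5, 132, -54, -78, -66, -27, 98, -34, -116, -57, -96, 32]⟩,
   ⟨40282694760, 575, 611, [-294, -237, 108, -22, 158, 190, -255, 58, 194, 260, -213, 720, -240]⟩,
   ⟨10281357240, 956, 1210, [-262, 83, -347, -17, -35, 395, -392, 394, 285, 12, -405, 135]⟩,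
   ⟨15764747768, 750, 977, [255, -375, -225, -407, 223, 126, -212, -305, -38, 207, -69]⟩,
   ⟨2055149845392, 55, 85, [-25, 25, 23, 3, 11, -7, -30, 7, 27, -9]⟩,
   ⟨1467964175280, 70, 101, [-15, 39, 29, -22, 24, -15, 31, 96, -32]⟩,
   ⟨949859172240, 85, 125, [17, 27, -6, -38, 15, -17, 198, -66]⟩,
   ⟨1018317490960, 74, 121, [14, 3, -1, -40, -4, -9, 3]⟩,
   ⟨168471643725, 160, 299, [-45, 89, -66, -51, -198, 66]⟩,
   ⟨6090153097875, 29, 49, [-9, -14, -13, -42, 14]⟩,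
   ⟨2784069987600, 42, 73, [17, 22, 51, -17]⟩,
   ⟨50461268525250, 8, 17, [-2, 3, -1]⟩,
   ⟨1059686639030250, 2, 3, [3, -1]⟩,
   ⟨235485919784500, 3, 8, [-1]⟩]

/-- The variables `α₁, …, α₁₇, α₀`. -/
def freeCoords (α : Fin 19 → ℤ) : List ℤ :=
  [α 1, α 2, α 3, α 4, α 5, α 6, α 7, α 8, α 9, α 10, α 11, α 12, α 13, α 14, α 15, α 16, α 17, α 0]

theorem pairing_eta (α : Fin 19 → ℤ) :
    α ⬝ᵥ G34.mulVec (Pi.single 0 1) = 3 * α 0 - α 18 := by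
  simp [G34, dotProduct, Fin.sum_univ_succ]
  ring

/-- `den * G34` is a positive combination of squares of linear forms, triangular in the variables
`α₁, …, α₁₇, α₀, s`. -/
theorem lagrange (α : Fin 19 → ℤ) : den * (α ⬝ᵥ G34.mulVec α) =
    rowsForm rows (freeCoords α ++ [3 * α 0 - α 18]) + den / 3 * (3 * α 0 - α 18) ^ 2 := by
  simp [G34, mulVec, dotProduct, Fin.sum_univ_succ, den, rows, freeCoords, rowsForm, dot]
  ring

theorem rows_pos : ∀ r ∈ rows, 0 < r.w ∧ 0 < r.p := by
  simp [rows]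

theorem freeCoords_inj {α β : Fin 19 → ℤ} (h : freeCoords α = freeCoords β)
    (h' : 3 * α 0 - α 18 = 3 * β 0 - β 18) : α = β := by
  simp only [freeCoords, List.cons.injEq, and_true] at h
  -- `α 0` is among the free coordinates, so the second hypothesis determines `α 18`.
  funext i
  fin_cases i <;> simp <;> omega

theorem G34_pos (v : Fin 19 → ℤ) (hv : v ≠ 0) : 0 < v ⬝ᵥ G34.mulVec v := by
  by_contra! hle
  have hl := lagrange v
  have hnn := rowsForm_nonneg rows (freeCoords v ++ [3 * v 0 - v 18]) fun r hr => (rows_pos r hr).1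
  have hd : den / 3 = 1883887358276000 := by decide
  have hd' : den = 5651662074828000 := rfl
  rw [hd, hd'] at hl
  -- All squares in the decomposition vanish; the last one is that of `v · η`.
  have hs : 3 * v 0 - v 18 = 0 := by
    have : (3 * v 0 - v 18) ^ 2 ≤ 0 := by nlinarith
    exact pow_eq_zero_iff two_ne_zero |>.1 (le_antisymm this (sq_nonneg _))
  rw [hs] at hl
  have := eq_zeros_of_rowsForm_le_zero 1 rows (freeCoords v) rows_pos rfl
    (by rw [List.replicate_one]; linarith)
  exact hv (freeCoords_inj (this.trans rfl) (by simpa using hs))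

/-! ### Counting the planes -/

/-- The budget left for the rows by a vector with `α² = 3` and `α · η = 1`. -/
def budget : ℤ := 3 * den - den / 3

/-- The coordinate lists of the planes: the solutions of the enumeration that use up the budget. -/
def planeList : List (List ℤ) :=
  ((enumerate [1] budget rows).filter fun q => decide (q.2 = 0)).map Prod.fst

theorem rows_valid :
    ∀ r ∈ rows, 0 < r.w ∧ 0 < r.p ∧ 0 ≤ r.t ∧ budget < r.w * (r.t + 1) ^ 2 := by
  simp [rows, budget, den]

theorem mem_planeList {l : List ℤ} : l ∈ planeList ↔
    ∃ xs : List ℤ, xs.length = 18 ∧ l = xs ++ [1] ∧ rowsForm rows l = budget := by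
  simp only [planeList, List.mem_map, List.mem_filter, decide_eq_true_eq, Prod.exists,
    exists_and_right, exists_eq_right]
  constructor
  · intro h
    obtain ⟨xs, h1, h2, h3, -⟩ :=
      (mem_enumerate [1] budget rows rows_valid (by decide) l 0).1 h
    exact ⟨xs, h1, h2, by simpa using h3⟩
  · rintro ⟨xs, h1, h2, h3⟩
    exact (mem_enumerate [1] budget rows rows_valid (by decide) l 0).2
      ⟨xs, h1, h2, by simpa using h3, le_rfl⟩

/-- The finite computation behind the count: the search tree has a few thousand nodes, and the kernel
evaluates it directly. -/
theorem planeList_card : planeList.length = 243 ∧ planeList.Nodup := by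
  decide +kernel

/-- The set of vectors with `α² = 3` and `α · η = 1`. -/
def planes : Set (Fin 19 → ℤ) :=
  {α | α ⬝ᵥ G34.mulVec α = 3 ∧ α ⬝ᵥ G34.mulVec (Pi.single 0 1) = 1}

theorem mem_planes_iff {α : Fin 19 → ℤ} : α ∈ planes ↔
    3 * α 0 - α 18 = 1 ∧ rowsForm rows (freeCoords α ++ [1]) = budget := by
  have hl := lagrange α
  have hd : den / 3 = 1883887358276000 := by decide
  have hd' : den = 5651662074828000 := rfl
  simp only [planes, Set.mem_ofPred_eq, pairing_eta, budget]
  rw [and_comm]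
  refine and_congr_right fun hs => ?_
  rw [hs] at hl
  rw [hd, hd'] at hl ⊢
  constructor <;> intro h <;> linarith

theorem injOn_planes : Set.InjOn (fun α => freeCoords α ++ [1]) planes := by
  intro α hα β hβ h
  exact freeCoords_inj (List.append_cancel_right h)
    ((mem_planes_iff.1 hα).1.trans (mem_planes_iff.1 hβ).1.symm)

/-- In the free coordinates, the planes are exactly the entries of `planeList`. -/
theorem image_planes :
    (fun α => freeCoords α ++ [1]) '' planes = (planeList.toFinset : Set (List ℤ)) := by
  ext l
  simp only [Set.mem_image, Finset.mem_coe, List.mem_toFinset, mem_planeList]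
  constructor
  · rintro ⟨α, hα, rfl⟩
    exact ⟨freeCoords α, rfl, rfl, (mem_planes_iff.1 hα).2⟩
  · rintro ⟨xs, hlen, rfl, hx⟩
    -- The vector with the given free coordinates and `α₁₈ = 3 * α₀ - 1`.
    have key : ∃ α : Fin 19 → ℤ, freeCoords α = xs ∧ 3 * α 0 - α 18 = 1 := by
      match xs, hlen with
      | [a1, a2, a3, a4, a5, a6, a7, a8, a9, a10, a11, a12, a13, a14, a15, a16, a17, a0], _ =>
        exact ⟨![a0, a1, a2, a3, a4, a5, a6, a7, a8, a9, a10, a11, a12, a13, a14, a15, a16, a17,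
          3 * a0 - 1], rfl, sub_sub_cancel _ _⟩
    obtain ⟨α, rfl, hs⟩ := key
    exact ⟨α, mem_planes_iff.2 ⟨hs, hx⟩, rfl⟩

/-! ### Generation -/

/-- Nineteen planes, one in each row, forming a basis of the lattice. -/
def planeBasis : Matrix (Fin 19) (Fin 19) ℤ :=
  !![0, 0, 0, 0, -1, 0, 0, 0, 0, 0, 0, 1, 0, 0, 0, 0, 0, 0, -1;
    0, 1, 1, 1, 0, 0, 0, 0, 0, 0, 0, 0, 0, 0, 0, 0, 0, 0, -1;
    0, 0, 0, 0, -1, 0, 0, -1, 0, 0, 0, 1, 0, 0, 0, 0, 0, 1, -1;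
    0, 0, 0, 0, -1, 1, 0, 0, 0, 0, 0, 1, 0, 0, 0, 0, 0, 1, -1;
    0, 0, 0, 0, -1, 1, 1, 0, 0, 0, 0, 1, 0, 0, 0, 0, 0, 1, -1;
    0, 0, 0, 0, 0, 0, 0, 0, 1, 1, 1, 1, 0, 0, 0, 0, 1, 0, -1;
    0, 0, 1, 1, 0, 0, 1, 0, 0, 0, 0, 0, 0, 0, 0, -1, 0, 1, -1;
    0, 0, 1, 1, 0, 1, 1, 0, 0, 0, 0, 0, 0, 0, 0, 0, 0, 1, -1;
    0, 0, 2, 1, 0, 0, 0, -1, 0, 0, 0, 0, 0, 0, -1, 0, 0, 0, -1;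
    0, 1, 0, -1, -1, 0, 0, 0, 0, 0, 0, 1, 0, 0, 0, 0, 0, 1, -1;
    0, 1, 1, 0, 0, 0, 0, 0, 0, 1, 1, 1, 0, 0, 0, 0, 0, 0, -1;
    0, 1, 1, 0, 0, 0, 0, 0, 1, 0, 0, 0, 1, 0, 0, 0, 1, 0, -1;
    0, 1, 1, 1, 0, 0, 1, 0, 0, 0, 0, 0, 0, 0, 0, 0, 0, 1, -1;
    0, 0, 0, -1, -1, 0, 0, 0, 1, 0, 0, 1, 0, -1, -1, 0, 0, 0, -1;
    0, 0, 0, 0, -1, 1, 1, 0, 0, -1, 0, 1, 0, 0, 0, 0, 0, 1, -1;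
    0, 0, 0, 0, -1, 1, 1, 0, 1, -1, 0, 1, 0, 0, 0, 0, 0, 0, -1;
    0, 0, 0, 0, -1, 1, 1, 0, 1, 0, 1, 1, 0, 0, 0, 0, 0, 0, -1;
    0, 1, 1, 0, 0, 0, 0, 0, 1, 1, 1, 0, 0, 0, 0, 0, 1, 0, -1;
    1, -1, -1, 0, 1, -1, -1, 0, -1, 0, -1, -1, 0, 0, 0, 0, 0, -1, 2]

/-- The inverse of `planeBasis`. -/
def planeBasisInv : Matrix (Fin 19) (Fin 19) ℤ :=
  !![0, 0, 0, 0, -1, 0, 0, 1, 0, 1, 0, 0, 0, 0, 0, 0, 1, 0, 1;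
    -1, 1, 0, 0, 1, 0, 0, -1, 0, 0, 0, 0, 0, 0, 0, 0, 0, 0, 0;
    1, -2, 0, 1, -1, -1, 0, 0, 0, -1, 1, 0, 1, 0, 0, 1, -1, 1, 0;
    0, 0, 0, 1, 0, 0, 0, -1, 0, -1, 0, 0, 1, 0, 0, 0, 0, 0, 0;
    -1, 1, 0, -1, 0, 1, 0, 1, 0, 1, 0, 0, -1, 0, 0, 0, 0, -1, 0;
    -1, 1, 0, 0, 1, 0, 0, 0, 0, 0, 0, 0, -1, 0, 0, 0, 0, 0, 0;
    0, 0, 0, -1, 1, 0, 0, 0, 0, 0, 0, 0, 0, 0, 0, 0, 0, 0, 0;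
    1, -1, -1, 1, -1, 0, 0, 0, 0, 0, 0, 0, 1, 0, 0, 0, 0, 0, 0;
    0, -1, 0, 1, -1, 0, 0, 0, 0, 0, 0, 0, 1, 0, -1, 1, 0, 0, 0;
    0, 0, 0, 0, 1, 0, 0, 0, 0, 0, 0, 0, 0, 0, -1, 0, 0, 0, 0;
    0, 0, 0, 0, -1, 0, 0, 0, 0, 0, 0, 0, 0, 0, 1, -1, 1, 0, 0;
    0, -1, 0, 1, 0, 0, 0, -1, 0, -1, 1, 0, 1, 0, 0, 1, -1, 0, 0;
    0, 0, 0, 0, 0, 0, 0, 0, 0, 0, 0, 1, 0, 0, 0, -1, 1, -1, 0;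
    0, 0, -1, 0, 0, 1, 0, 0, 1, 2, -1, 0, 0, -1, -1, 0, 1, -1, 0;
    1, -1, 1, 0, -1, -1, 0, 1, -1, -1, 1, 0, 0, 0, 0, 1, -1, 1, 0;
    1, -1, 0, 0, -1, 0, -1, 1, 0, 0, 0, 0, 1, 0, 0, 0, 0, 0, 0;
    0, 0, 0, 0, 1, 0, 0, -1, 0, -1, 0, 0, 0, 0, 1, 0, -1, 1, 0;
    0, -1, 0, 1, -1, 0, 0, 0, 0, 0, 0, 0, 1, 0, 0, 0, 0, 0, 0;
    0, -2, 0, 2, 0, -1, 0, -2, 0, -2, 1, 0, 2, 0, 0, 1, -1, 1, 0]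

theorem planeBasisInv_mul : planeBasisInv * planeBasis = 1 := by
  decide +kernel

theorem planeBasis_mem (i : Fin 19) : planeBasis i ∈ planes := by
  have h : ∀ i, planeBasis i ⬝ᵥ G34.mulVec (planeBasis i) = 3 ∧
      planeBasis i ⬝ᵥ G34.mulVec (Pi.single 0 1) = 1 := by decide +kernel
  exact h i

theorem span_planes : Submodule.span ℤ planes = ⊤ := by
  refine Submodule.eq_top_iff'.2 fun x => ?_
  have hx : x = ∑ i, (x ᵥ* planeBasisInv) i • planeBasis i := by
    rw [← Matrix.vecMul_eq_sum, Matrix.vecMul_vecMul, planeBasisInv_mul, Matrix.vecMul_one]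
  rw [hx]
  exact Submodule.sum_mem _ fun i _ =>
    Submodule.smul_mem _ _ (Submodule.subset_span (planeBasis_mem i))

/-- `G34` (the Gram matrix of `A(X)` for a general cubic fourfold
with symplectic automorphism `φ₃⁴`) is positive definite; there are exactly 243
vectors `α` with `α² = 3` and `α·η = 1` (the classes of planes), and they
generate the whole lattice. -/
theorem stmt_5 :
    (∀ v : Fin 19 → ℤ, v ≠ 0 → 0 < v ⬝ᵥ G34.mulVec v) ∧
    {α : Fin 19 → ℤ |
      α ⬝ᵥ G34.mulVec α = 3 ∧ α ⬝ᵥ G34.mulVec (Pi.single 0 1) = 1}.Finite ∧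
    {α : Fin 19 → ℤ |
      α ⬝ᵥ G34.mulVec α = 3 ∧ α ⬝ᵥ G34.mulVec (Pi.single 0 1) = 1}.ncard = 243 ∧
    Submodule.span ℤ {α : Fin 19 → ℤ |
      α ⬝ᵥ G34.mulVec α = 3 ∧ α ⬝ᵥ G34.mulVec (Pi.single 0 1) = 1} = ⊤ := by
  refine ⟨G34_pos, ?_, ?_, span_planes⟩
  · exact Set.Finite.of_finite_image (image_planes ▸ planeList.toFinset.finite_toSet) injOn_planes
  · change planes.ncard = 243
    rw [← injOn_planes.ncard_image, image_planes, Set.ncard_coe_finset,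
      List.toFinset_card_of_nodup planeList_card.2, planeList_card.1]
end

section
/- Let G34 be the 19×19 symmetric integer matrix with rows [3,0,0,0,0,0,0,0,0,0,0,0,0,0,0,0,0,0,-1]; [0,4,-2,1,0,2,1,-2,0,2,-2,1,-1,-1,-2,-2,1,-1,2]; [0,-2,4,1,-3,-2,-1,2,2,-1,1,1,-1,-1,2,2,0,2,4]; [0,1,1,4,-4,-1,-1,1,2,1,1,2,0,-2,-1,1,1,2,6]; [0,0,-3,-4,8,2,0,-2,-2,-2,-1,-1,0,1,1,-2,-2,-2,-8]; [0,2,-2,-1,2,4,0,-2,-1,2,-2,-1,-1,0,0,-2,-1,-2,-2]; [0,1,-1,-1,0,0,4,-2,-2,1,-1,0,1,0,-1,0,2,-2,0]; [0,-2,2,1,-2,-2,-2,4,1,-1,1,0,0,1,0,2,0,2,1]; [0,0,2,2,-2,-1,-2,1,4,0,0,1,-2,-1,1,0,-1,2,4]; [0,2,-1,1,-2,2,1,-1,0,4,-2,0,0,0,-1,-1,0,-1,2]; [0,-2,1,1,-1,-2,-1,1,0,-2,4,0,2,0,0,2,0,2,1]; [0,1,1,2,-1,-1,0,0,1,0,0,4,0,-2,0,0,1,1,5];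 [0,-1,-1,0,0,-1,1,0,-2,0,2,0,4,1,-1,1,0,0,-1]; [0,-1,-1,-2,1,0,0,1,-1,0,0,-2,1,4,-1,0,-1,-1,-4]; [0,-2,2,-1,1,0,-1,0,1,-1,0,0,-1,-1,4,0,-2,0,-1]; [0,-2,2,1,-2,-2,0,2,0,-1,2,0,1,0,0,4,1,2,2]; [0,1,0,1,-2,-1,2,0,-1,0,0,1,0,-1,-2,1,4,0,3]; [0,-1,2,2,-2,-2,-2,2,2,-1,2,1,0,-1,0,2,0,4,4]; [-1,2,4,6,-8,-2,0,1,4,2,1,5,-1,-4,-1,2,3,4,15]. Then the cokernel ℤ^19/(G34·ℤ^19) of the ℤ-linear map given by G34 is isomorphic, as an abelian group, to (ℤ/3ℤ)^4. -/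
/-!
The matrix `N34 = 3 • G34⁻¹` is integral, so the cokernel of `G34` is killed by `3`, and `v` lies in
the image of `G34` exactly when `N34 *ᵥ v` is divisible by `3`: if `N34 *ᵥ v = 3 • w`, then
`3 • v = G34 *ᵥ (N34 *ᵥ v) = 3 • G34 *ᵥ w`. Hence the cokernel is the image of `N34` modulo `3`, and
it remains to see that `N34` has rank `4` over `𝔽₃`. Its reduced row echelon form is `L34`, with
pivot columns `0, 1, 2, 4`, so `v ↦ L34 *ᵥ v mod 3` is a surjection onto `(ℤ/3ℤ)⁴` whose kernel is
the image of `G34`. The numerical identities between these matrices are checked by evaluation.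
-/

open Matrix

/-- The integral matrix `3 • G34⁻¹`. -/
def N34 : Matrix (Fin 19) (Fin 19) ℤ :=
  !![9, -6, -5, 10, 16, -20, -14, -5, -21, 0, -10, -21, -4, 5, 3, -1, -6, -12, 24;
    -6, 10, 4, -10, -12, 13, 9, 5, 16, 1, 9, 15, 4, -4, 0, 2, 5, 8, -18;
    -5, 4, 32, 25, 10, 8, 8, -6, 2, 5, 1, 1, 5, 10, -2, -9, 11, 10, -15;
    10, -10, 25, 58, 44, -29, -15, -18, -42, 3, -21, -41, -4, 26, 7, -14, 1, -9, 30;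
    16, -12, 10, 44, 48, -44, -28, -16, -50, 5, -23, -51, -7, 20, 7, -9, -6, -22, 48;
    -20, 13, 8, -29, -44, 56, 38, 15, 56, -4, 25, 55, 11, -14, -8, 3, 14, 31, -60;
    -14, 9, 8, -15, -28, 38, 30, 11, 37, -2, 18, 37, 6, -8, -5, 0, 9, 23, -42;
    -5, 5, -6, -18, -16, 15, 11, 10, 18, -1, 10, 17, 2, -9, -2, 3, 1, 6, -15;
    -21, 16, 2, -42, -50, 56, 37, 18, 64, -2, 29, 60, 12, -20, -9, 7, 14, 29, -63;
    0, 1, 5, 3, 5, -4, -2, -1, -2, 6, 2, -2, -1, 1, 0, -1, 2, -1, 0;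
    -10, 9, 1, -21, -23, 25, 18, 10, 29, 2, 18, 29, 3, -10, -4, 3, 6, 13, -30;
    -21, 15, 1, -41, -51, 55, 37, 17, 60, -2, 29, 62, 9, -19, -9, 7, 12, 30, -63;
    -4, 4, 5, -4, -7, 11, 6, 2, 12, -1, 3, 9, 6, -2, -1, 0, 5, 6, -12;
    5, -4, 10, 26, 20, -14, -8, -9, -20, 1, -10, -19, -2, 14, 5, -6, 1, -4, 15;
    3, 0, -2, 7, 7, -8, -5, -2, -9, 0, -4, -9, -1, 5, 6, -1, 0, -3, 9;
    -1, 2, -9, -14, -9, 3, 0, 3, 7, -1, 3, 7, 0, -6, -1, 6, -2, -1, -3;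
    -6, 5, 11, 1, -6, 14, 9, 1, 14, 2, 6, 12, 5, 1, 0, -2, 10, 10, -18;
    -12, 8, 10, -9, -22, 31, 23, 6, 29, -1, 13, 30, 6, -4, -3, -1, 10, 22, -36;
    24, -18, -15, 30, 48, -60, -42, -15, -63, 0, -30, -63, -12, 15, 9, -3, -18, -36, 72]

/-- The reduced row echelon form of `N34` modulo `3`, lifted to `ℤ` with entries in `{-1, 0, 1}`. -/
def L34 : Matrix (Fin 4) (Fin 19) ℤ :=
  !![1, 0, 0, 1, 0, 0, 1, 0, 1, 1, -1, 1, -1, 0, 1, -1, 0, -1, 0;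
    0, 1, 0, 1, 0, 0, -1, 0, 1, 0, 1, 1, 1, 0, 0, 1, -1, -1, 0;
    0, 0, 1, 1, 0, 1, 1, -1, 0, 1, -1, -1, 0, -1, 0, 1, 0, 0, 0;
    0, 0, 0, 0, 1, 0, 0, -1, 0, -1, 0, 1, -1, 0, 0, 1, 0, 0, 0]

/-- The pivot columns of `L34`. -/
def pivot34 : Fin 4 → Fin 19 := ![0, 1, 2, 4]

theorem G34_mul_N34 : G34 * N34 = (3 : ℤ) • 1 := by decide +kernel

theorem three_dvd_L34_mul_G34 : ∀ i j, (3 : ℤ) ∣ (L34 * G34) i j := by decide +kernel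

/-- Modulo `3`, every row of `N34` is the combination of the rows of the echelon form whose
coefficients are its pivot entries. -/
theorem three_dvd_N34_sub :
    ∀ i j, (3 : ℤ) ∣ N34 i j - (N34.submatrix id pivot34 * L34) i j := by decide +kernel

theorem L34_mul_pivot : L34 * (1 : Matrix (Fin 19) (Fin 19) ℤ).submatrix id pivot34 = 1 := by
  decide +kernel

theorem three_dvd_mulVec {m n : ℕ} {A : Matrix (Fin m) (Fin n) ℤ}
    (hA : ∀ i j, (3 : ℤ) ∣ A i j) (v : Fin n → ℤ) (i : Fin m) : (3 : ℤ) ∣ (A *ᵥ v) i := by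
  simp only [mulVec, dotProduct]
  exact Finset.dvd_sum fun j _ => (hA i j).mul_right (v j)

theorem mulVec_three_dvd {m n : ℕ} (A : Matrix (Fin m) (Fin n) ℤ) {v : Fin n → ℤ}
    (hv : ∀ j, (3 : ℤ) ∣ v j) (i : Fin m) : (3 : ℤ) ∣ (A *ᵥ v) i := by
  simp only [mulVec, dotProduct]
  exact Finset.dvd_sum fun j _ => (hv j).mul_left (A i j)

/-- The map `v ↦ L34 *ᵥ v mod 3`, which induces the isomorphism on the cokernel of `G34`. -/
def discMap : (Fin 19 → ℤ) →ₗ[ℤ] (Fin 4 → ZMod 3) :=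
  (Int.castAddHom (ZMod 3)).toIntLinearMap.compLeft (Fin 4) ∘ₗ L34.mulVecLin

theorem discMap_apply (v : Fin 19 → ℤ) (i : Fin 4) :
    discMap v i = ((L34 *ᵥ v) i : ZMod 3) := rfl

theorem discMap_surjective : Function.Surjective discMap := by
  intro y
  choose z hz using fun i => ZMod.intCast_surjective (y i)
  refine ⟨(1 : Matrix (Fin 19) (Fin 19) ℤ).submatrix id pivot34 *ᵥ z, ?_⟩
  ext1 i
  rw [discMap_apply, mulVec_mulVec, L34_mul_pivot, one_mulVec, hz]

theorem mem_ker_discMap (v : Fin 19 → ℤ) :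
    v ∈ LinearMap.ker discMap ↔ ∀ i, (3 : ℤ) ∣ (L34 *ᵥ v) i := by
  rw [LinearMap.mem_ker, funext_iff]
  exact forall_congr' fun i => ZMod.intCast_zmod_eq_zero_iff_dvd _ 3

theorem range_eq_ker : LinearMap.range G34.mulVecLin = LinearMap.ker discMap := by
  ext v
  rw [mem_ker_discMap]
  constructor
  · rintro ⟨w, rfl⟩ i
    rw [mulVecLin_apply, mulVec_mulVec]
    exact three_dvd_mulVec three_dvd_L34_mul_G34 w i
  · intro hv
    have hN : ∀ i, (3 : ℤ) ∣ (N34 *ᵥ v) i := fun i => by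
      have h := dvd_add (three_dvd_mulVec (A := N34 - N34.submatrix id pivot34 * L34)
          three_dvd_N34_sub v i)
        (mulVec_three_dvd (N34.submatrix id pivot34) hv i)
      rwa [mulVec_mulVec, ← Pi.add_apply, ← add_mulVec, sub_add_cancel] at h
    choose w hw using hN
    have hw' : N34 *ᵥ v = (3 : ℤ) • w := funext hw
    refine ⟨w, smul_right_injective _ (by norm_num : (3 : ℤ) ≠ 0) ?_⟩
    change (3 : ℤ) • G34 *ᵥ w = (3 : ℤ) • v
    rw [← mulVec_smul, ← hw', mulVec_mulVec, G34_mul_N34, smul_mulVec, one_mulVec]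

/-- The discriminant group of the lattice with Gram matrix `G34`,
i.e. the cokernel `ℤ¹⁹/(G34·ℤ¹⁹)`, is isomorphic to `(ℤ/3ℤ)⁴`. -/
theorem stmt_7 :
    Nonempty (((Fin 19 → ℤ) ⧸ LinearMap.range G34.mulVecLin) ≃+ (Fin 4 → ZMod 3)) := by
  exact ⟨((Submodule.quotEquivOfEq _ _ range_eq_ker).trans
    (discMap.quotKerEquivOfSurjective discMap_surjective)).toAddEquiv⟩
end

section
/- Let G36 be the 12×12 symmetric integer matrix with rows [4,1,-2,2,2,1,-2,2,-1,1,2,-2]; [1,4,0,2,-1,-1,1,-1,-2,2,-1,1]; [-2,0,4,-1,-2,0,2,0,-1,1,0,0]; [2,2,-1,4,0,-1,0,0,0,2,0,-1]; [2,-1,-2,0,4,0,-2,2,1,0,2,-2]; [1,-1,0,-1,0,4,-2,2,0,-1,0,-1]; [-2,1,2,0,-2,-2,4,-2,0,0,-1,2]; [2,-1,0,0,2,2,-2,4,0,1,2,-2]; [-1,-2,-1,0,1,0,0,0,4,-1,-1,0]; [1,2,1,2,0,-1,0,1,-1,4,1,-1]; [2,-1,0,0,2,0,-1,2,-1,1,4,-2];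 [-2,1,0,-1,-2,-1,2,-2,0,-1,-2,4]. Then G36 is positive definite, the set S = {v ∈ ℤ^12 : vᵀ·G36·v = 4} is finite with exactly 756 elements, and the set {(1,v) : v ∈ S} ⊆ ℤ × ℤ^12 generates ℤ × ℤ^12 as a ℤ-module. -/
/-!
Completing the square, from the last coordinate down to the first, gives an identity
`M * vᵀ G36 v = ∑ i, cᵢ (aᵢ vᵢ + ∑ j < i, aᵢⱼ vⱼ)²` with `M = 2329006422600`, all `cᵢ, aᵢ > 0` and
integers `aᵢⱼ` (lemma `sumSq_ofFn`). In particular the form is nonnegative, and the vectors of a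
given square can be listed by a depth-first search (Fincke–Pohst): once the coordinates before `vᵢ`
are chosen, the `i`-th square leaves only a few possibilities for `vᵢ`. The search `search` is
proved to be complete, sound and free of repetitions (`mem_search`, `nodup_search`) and is then
evaluated in the kernel: it returns only the zero vector for the value `0`, which gives positive
definiteness, and a list of length `756` for the value `4`.

For the generation statement, every diagonal entry of `G36` is `4`, so `(1, ±eᵢ)` are among the
generators, and `e₀ - e₃` also has square `4` because the `(0, 3)` entry is `2`. Hence
`(2, 0) = (1, e₀) + (1, -e₀)` and `(3, 0) = (1, e₀ - e₃) + (1, -e₀) + (1, e₃)` lie in the span, so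
`(1, 0)` does, and then so does every `(0, eᵢ) = (1, eᵢ) - (1, 0)`.
-/

open Matrix

def G36 : Matrix (Fin 12) (Fin 12) ℤ :=
  !![4, 1, -2, 2, 2, 1, -2, 2, -1, 1, 2, -2;
    1, 4, 0, 2, -1, -1, 1, -1, -2, 2, -1, 1;
    -2, 0, 4, -1, -2, 0, 2, 0, -1, 1, 0, 0;
    2, 2, -1, 4, 0, -1, 0, 0, 0, 2, 0, -1;
    2, -1, -2, 0, 4, 0, -2, 2, 1, 0, 2, -2;
    1, -1, 0, -1, 0, 4, -2, 2, 0, -1, 0, -1;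
    -2, 1, 2, 0, -2, -2, 4, -2, 0, 0, -1, 2;
    2, -1, 0, 0, 2, 2, -2, 4, 0, 1, 2, -2;
    -1, -2, -1, 0, 1, 0, 0, 0, 4, -1, -1, 0;
    1, 2, 1, 2, 0, -1, 0, 1, -1, 4, 1, -1;
    2, -1, 0, 0, 2, 0, -1, 2, -1, 1, 4, -2;
    -2, 1, 0, -1, -2, -1, 2, -2, 0, -1, -2, 4]

/-- One square `coef * (lead * v + ∑ tail * earlier coordinates)²` in the decomposition of a positive
definite form. The list `tail` starts with the coefficient of the immediately preceding coordinate.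
The number `bound` limits the absolute value of the linear form during the search. -/
structure SqRow where
  coef : ℤ
  bound : ℤ
  lead : ℤ
  tail : List ℤ

/-- Dot product of two lists, truncated to the shorter one. -/
def listDot : List ℤ → List ℤ → ℤ
  | a :: as, x :: xs => a * x + listDot as xs
  | _, _ => 0

/-- Value of the sum of squares on the coordinates `l`, where `x` holds the coordinates already
consumed, the most recent one first. -/
def sumSq : List SqRow → List ℤ → List ℤ → ℤ
  | r :: rs, x, v :: l =>
      r.coef * (r.lead * v + listDot r.tail x) ^ 2 + sumSq rs (v :: x) l
  | _, _, _ => 0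

/-- The integers of the interval `[lo, hi]`, in increasing order. -/
def intRange (lo hi : ℤ) : List ℤ :=
  (List.range (hi - lo + 1).toNat).map fun k : ℕ => lo + k

/-- Equal to `f n`. The case distinction makes the kernel evaluate `n` to a numeral before it is
substituted into `f`, so that a value used several times is computed only once. -/
def forceInt {α : Type} (n : ℤ) (f : ℤ → α) : α :=
  match n with
  | .ofNat 0 => f (.ofNat 0)
  | .ofNat (m + 1) => f (.ofNat (m + 1))
  | .negSucc 0 => f (.negSucc 0)
  | .negSucc (m + 1) => f (.negSucc (m + 1))

@[simp]
lemma forceInt_eq {α : Type} (n : ℤ) (f : ℤ → α) : forceInt n f = f n := by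
  rcases n with (_ | _) | (_ | _) <;> rfl

/-- Depth-first search for the coordinate lists on which the sum of squares takes the value `b`,
given the coordinates `x` already chosen, the most recent one first. -/
def search : List SqRow → ℤ → List ℤ → List (List ℤ)
  | [], b, _ => if b = 0 then [[]] else []
  | r :: rs, b, x =>
      forceInt (listDot r.tail x) fun t =>
        (intRange (-((r.bound + t) / r.lead)) ((r.bound - t) / r.lead)).flatMap fun z =>
          forceInt z fun v =>
            forceInt (r.lead * v + t) fun y => forceInt (b - r.coef * (y * y)) fun b' =>
              if 0 ≤ b' then (search rs b' (v :: x)).map (v :: ·) else []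

lemma mem_intRange {lo hi z : ℤ} : z ∈ intRange lo hi ↔ lo ≤ z ∧ z ≤ hi := by
  simp only [intRange, List.mem_map, List.mem_range]
  constructor
  · rintro ⟨k, hk, rfl⟩
    omega
  · rintro ⟨h1, h2⟩
    exact ⟨(z - lo).toNat, by omega, by omega⟩

lemma nodup_intRange (lo hi : ℤ) : (intRange lo hi).Nodup :=
  List.Nodup.map (fun a b h => by simpa using h) List.nodup_range

lemma sumSq_nonneg (rs : List SqRow) (h : ∀ r ∈ rs, 0 < r.coef) (x l : List ℤ) :
    0 ≤ sumSq rs x l := by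
  induction rs generalizing x l with
  | nil => simp [sumSq]
  | cons r rs ih =>
    cases l with
    | nil => simp [sumSq]
    | cons v l =>
      have h1 := ih (fun r hr => h r (List.mem_cons_of_mem _ hr)) (v :: x) l
      have h2 := h r List.mem_cons_self
      simp only [sumSq]
      positivity

/-- If `B` is too small for any linear form to exceed its `bound`, then for values `b ≤ B` the search
finds exactly the solutions. -/
lemma mem_search (B : ℤ) (rs : List SqRow)
    (h : ∀ r ∈ rs, 0 < r.coef ∧ 0 < r.lead ∧ 0 ≤ r.bound ∧ B < r.coef * (r.bound + 1) ^ 2)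
    (b : ℤ) (hb : b ≤ B) (x l : List ℤ) :
    l ∈ search rs b x ↔ l.length = rs.length ∧ sumSq rs x l = b := by
  induction rs generalizing x l b with
  | nil =>
    by_cases h0 : b = 0
    · simp [search, sumSq, h0]
    · simp [search, sumSq, h0, Ne.symm h0]
  | cons r rs ih =>
    have hrs := fun r hr => h r (List.mem_cons_of_mem _ hr)
    obtain ⟨hc, ha, hm, hB⟩ := h r List.mem_cons_self
    simp only [search, forceInt_eq, ← sq, List.mem_flatMap]
    constructor
    · rintro ⟨v, -, hl⟩
      split_ifs at hl with hv
      · obtain ⟨l', hl', rfl⟩ := List.mem_map.1 hl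
        have hle : b - r.coef * (r.lead * v + listDot r.tail x) ^ 2 ≤ B := by
          have : 0 ≤ r.coef * (r.lead * v + listDot r.tail x) ^ 2 := by positivity
          linarith
        obtain ⟨h1, h2⟩ := (ih hrs _ hle _ _).1 hl'
        refine ⟨by simp [h1], ?_⟩
        simp only [sumSq, h2]
        ring
      · simp at hl
    · rintro ⟨hlen, hsum⟩
      cases l with
      | nil => simp at hlen
      | cons v l =>
        simp only [sumSq] at hsum
        have hn := sumSq_nonneg rs (fun r hr => (hrs r hr).1) (v :: x) l
        have hsq : 0 ≤ r.coef * (r.lead * v + listDot r.tail x) ^ 2 := by positivity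
        have hlt : (r.lead * v + listDot r.tail x) ^ 2 < (r.bound + 1) ^ 2 :=
          lt_of_mul_lt_mul_left (by linarith) hc.le
        have habs := abs_lt_of_sq_lt_sq' hlt (by linarith)
        refine ⟨v, mem_intRange.2 ⟨?_, ?_⟩, ?_⟩
        · have : -v ≤ (r.bound + listDot r.tail x) / r.lead := by
            rw [Int.le_ediv_iff_mul_le ha]
            linarith [Int.add_one_le_of_lt habs.1]
          linarith
        · rw [Int.le_ediv_iff_mul_le ha]
          linarith [Int.lt_add_one_iff.1 habs.2]
        · rw [if_pos (by linarith)]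
          exact List.mem_map_of_mem
            ((ih hrs _ (by linarith) _ _).2 ⟨by simpa using hlen, by linarith⟩)

lemma nodup_search (rs : List SqRow) (b : ℤ) (x : List ℤ) : (search rs b x).Nodup := by
  induction rs generalizing x b with
  | nil => simp only [search]; split_ifs <;> simp
  | cons r rs ih =>
    simp only [search, forceInt_eq, ← sq]
    refine List.nodup_flatMap.2 ⟨fun v _ => ?_, ?_⟩
    · split_ifs
      · exact (ih _ _).map (List.cons_injective)
      · exact List.nodup_nil
    · refine (nodup_intRange _ _).imp fun {v w} hvw l hl hl' => hvw ?_
      dsimp only at hl hl'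
      split_ifs at hl hl'
      all_goals simp only [List.mem_map, List.not_mem_nil] at hl hl'
      obtain ⟨p, -, rfl⟩ := hl
      obtain ⟨q, -, hq⟩ := hl'
      exact (List.cons.inj hq).1.symm

/-- The squares in the decomposition of `2329006422600 * vᵀ G36 v`. The bounds are the integer parts
of `√(4 * 2329006422600 / coef)`. -/
def rows36 : List SqRow :=
  [⟨873377408475, 3, 1, []⟩,
    ⟨15879589245, 24, 8, [3]⟩,
    ⟨582737220, 126, 55, [-4, -29]⟩,
    ⟨124710300, 273, 218, [-121, 96, 151]⟩,
    ⟨45311409, 453, 257, [-28, -133, 148, 115]⟩,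
    ⟨47145879, 444, 300, [-161, -56, 109, -4, 5]⟩,
    ⟨23811050, 625, 494, [-115, -140, 5, 374, 18, -146]⟩,
    ⟨3113644950, 54, 44, [-18, 31, 10, -9, 0, -6, 12]⟩,
    ⟨345960550, 164, 153, [18, 5, -19, 52, 11, -34, -72, -26]⟩,
    ⟨17643988050, 22, 22, [-5, 2, 3, -7, -4, 11, 6, 14, 2]⟩,
    ⟨194083868550, 6, 6, [1, -2, 2, 0, -1, 2, -1, 0, -1, 2]⟩,
    ⟨582251605650, 4, 4, [-2, -1, 0, -2, 2, -1, -2, -1, 0, 1, -2]⟩]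

/-- The decomposition of the form into squares with positive weights. -/
lemma sumSq_ofFn (v : Fin 12 → ℤ) :
    sumSq rows36 [] (List.ofFn v) = 2329006422600 * (v ⬝ᵥ G36.mulVec v) := by
  simp [rows36, List.ofFn_succ, sumSq, listDot, G36, dotProduct, Matrix.mulVec, Fin.sum_univ_succ]
  ring

lemma rows36_spec : ∀ r ∈ rows36, 0 < r.coef ∧ 0 < r.lead ∧ 0 ≤ r.bound ∧
    2329006422600 * 4 < r.coef * (r.bound + 1) ^ 2 := by
  simp [rows36]

lemma form_nonneg (v : Fin 12 → ℤ) : 0 ≤ v ⬝ᵥ G36.mulVec v := by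
  have h := sumSq_nonneg rows36 (fun r hr => (rows36_spec r hr).1) [] (List.ofFn v)
  rw [sumSq_ofFn] at h
  linarith

lemma form_eq_iff (k : ℤ) (hk : k ≤ 4) (v : Fin 12 → ℤ) :
    v ⬝ᵥ G36.mulVec v = k ↔ List.ofFn v ∈ search rows36 (2329006422600 * k) [] := by
  rw [mem_search _ rows36 rows36_spec _ (by linarith), sumSq_ofFn]
  simp [rows36]

lemma search_zero : search rows36 (2329006422600 * 0) [] = [List.ofFn (0 : Fin 12 → ℤ)] := by
  decide +kernel

lemma length_search_four : (search rows36 (2329006422600 * 4) []).length = 756 := by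
  decide +kernel

lemma image_ofFn : List.ofFn '' {v : Fin 12 → ℤ | v ⬝ᵥ G36.mulVec v = 4} =
    ((search rows36 (2329006422600 * 4) []).toFinset : Set (List ℤ)) := by
  ext l
  simp only [Set.mem_image, Set.mem_ofPred_eq, List.coe_toFinset]
  constructor
  · rintro ⟨v, hv, rfl⟩
    exact (form_eq_iff 4 le_rfl v).1 hv
  · intro hl
    have hlen : l.length = 12 :=
      ((mem_search _ rows36 rows36_spec _ le_rfl _ _).1 hl).1
    obtain ⟨v, rfl⟩ : ∃ v : Fin 12 → ℤ, List.ofFn v = l :=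
      ⟨fun i => l.get (i.cast hlen.symm),
        List.ext_get (by rw [List.length_ofFn, hlen]) fun n _ _ => by
          rw [List.get_ofFn]; rfl⟩
    exact ⟨v, (form_eq_iff 4 le_rfl v).2 hl, rfl⟩

lemma form_single (i : Fin 12) :
    (Pi.single i 1 : Fin 12 → ℤ) ⬝ᵥ G36.mulVec (Pi.single i 1) = 4 := by
  rw [Matrix.mulVec_single_one, single_one_dotProduct]
  revert i
  decide

lemma form_neg (v : Fin 12 → ℤ) : (-v) ⬝ᵥ G36.mulVec (-v) = v ⬝ᵥ G36.mulVec v := by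
  rw [Matrix.mulVec_neg, neg_dotProduct_neg]

/-- `G36` is positive definite; there are exactly 756 vectors of
square 4 (corresponding to the classes of cubic scrolls via `η + v`), and the
vectors `(1, v)` for `v` of square 4 generate the full lattice
`⟨η⟩ ⊕ A_prim(X) = ℤ × ℤ^12`. -/
theorem stmt_8 :
    (∀ v : Fin 12 → ℤ, v ≠ 0 → 0 < v ⬝ᵥ G36.mulVec v) ∧
    {v : Fin 12 → ℤ | v ⬝ᵥ G36.mulVec v = 4}.Finite ∧
    {v : Fin 12 → ℤ | v ⬝ᵥ G36.mulVec v = 4}.ncard = 756 ∧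
    Submodule.span ℤ {p : ℤ × (Fin 12 → ℤ) |
      p.1 = 1 ∧ p.2 ⬝ᵥ G36.mulVec p.2 = 4} = ⊤ := by
  refine ⟨fun v hv => lt_of_le_of_ne (form_nonneg v) fun h => hv ?_, ?_, ?_, ?_⟩
  · have hmem := (form_eq_iff 0 (by norm_num) v).1 h.symm
    rw [search_zero, List.mem_singleton] at hmem
    exact List.ofFn_injective hmem
  · refine Set.Finite.of_finite_image ?_ List.ofFn_injective.injOn
    rw [image_ofFn]
    exact Finset.finite_toSet _
  · rw [← Set.ncard_image_of_injective _ List.ofFn_injective, image_ofFn, Set.ncard_coe_finset,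
      List.toFinset_card_of_nodup (nodup_search _ _ _), length_search_four]
  · set S := Submodule.span ℤ {p : ℤ × (Fin 12 → ℤ) |
      p.1 = 1 ∧ p.2 ⬝ᵥ G36.mulVec p.2 = 4} with hS
    have gen : ∀ v : Fin 12 → ℤ, v ⬝ᵥ G36.mulVec v = 4 → ((1 : ℤ), v) ∈ S :=
      fun v hv => Submodule.subset_span ⟨rfl, hv⟩
    have hpos := fun i => gen _ (form_single i)
    have hneg := fun i => gen (-Pi.single i 1) (by rw [form_neg, form_single])
    have hdiff := gen (Pi.single 0 1 - Pi.single 3 1) (by decide +kernel)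
    have hone : ((1 : ℤ), (0 : Fin 12 → ℤ)) ∈ S := by
      have h := S.sub_mem (S.add_mem (S.add_mem hdiff (hneg 0)) (hpos 3))
        (S.add_mem (hpos 0) (hneg 0))
      convert h using 1
      ext
      · simp
      · simp only [Prod.snd_sub, Prod.snd_add, Pi.sub_apply, Pi.add_apply, Pi.neg_apply,
          Pi.zero_apply]
        ring
    have hbasis : ∀ i : Fin 12, ((0 : ℤ), (Pi.single i 1 : Fin 12 → ℤ)) ∈ S := fun i => by
      simpa using S.sub_mem (hpos i) hone
    refine eq_top_iff.2 fun p _ => ?_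
    have hp : p = p.1 • ((1 : ℤ), (0 : Fin 12 → ℤ)) +
        ∑ i, p.2 i • ((0 : ℤ), (Pi.single i 1 : Fin 12 → ℤ)) := by
      ext j
      · simp [Prod.fst_sum]
      · simp [Prod.snd_sum, Finset.sum_apply, Pi.single_apply]
    rw [hp]
    exact S.add_mem (S.smul_mem _ hone) (S.sum_mem fun i _ => S.smul_mem _ (hbasis i))
end
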